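/- In the hypercube-center graph G_S, for every left-half center X_{x_1,x_2,x_3} and every right-half center Y_{y_4,y_5,y_6}, we have dist_{G_S}(X_{x_1,x_2,x_3}, Y_{y_4,y_5,y_6}) > 2 if and only if (x_1,x_2,x_3,y_4,y_5,y_6) is an independent set in G, i.e., no 3-element subset of {x_1,x_2,x_3,y_4,y_5,y_6} is a hyperedge of E. -/

import Mathlib

open scoped Classical

/-- A vertex of the 6-partite 3-uniform hypergraph: a part `ℓ ∈ Fin 6` together with a
value in `[n]` (represented by `Fin n`). -/
abbrev HypVert (n : ℕ) := Fin 6 × Fin n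

/-- The value `v/(n+1)` associated to a vertex value `v ∈ [n]` (here `v : Fin n` represents
the value `v+1 ∈ [n]`). -/
noncomputable def hval (n : ℕ) (v : Fin n) : ℝ := ((v : ℕ) + 1) / ((n : ℝ) + 1)

/-- The set of parts met by a set of hypergraph vertices. -/
def hparts {n : ℕ} (e : Finset (HypVert n)) : Finset (Fin 6) := e.image Prod.fst

/-- The hyperedge set is well-formed: every hyperedge consists of `3` vertices lying in
three pairwise distinct parts. -/
def WellFormed {n : ℕ} (E : Set (Finset (HypVert n))) : Prop :=
  ∀ e ∈ E, e.card = 3 ∧ (hparts e).card = 3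

/-- The vertex triple `{(1, x₁), (2, x₂), (3, x₃)}` (parts `1,2,3`, `0`-based `0,1,2`). -/
def tripleL {n : ℕ} (x : Fin 3 → Fin n) : Finset (HypVert n) :=
  Finset.univ.image fun ℓ : Fin 3 => ((⟨(ℓ : ℕ), by have := ℓ.isLt; omega⟩ : Fin 6), x ℓ)

/-- The vertex triple `{(4, y₄), (5, y₅), (6, y₆)}` (parts `4,5,6`, `0`-based `3,4,5`). -/
def tripleR {n : ℕ} (y : Fin 3 → Fin n) : Finset (HypVert n) :=
  Finset.univ.image fun ℓ : Fin 3 => ((⟨(ℓ : ℕ) + 3, by have := ℓ.isLt; omega⟩ : Fin 6), y ℓ)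

/-- The left-half center `X x`: in the coordinate pair of part `ℓ ∈ {1,2,3}` it equals
`(x_ℓ/(n+1), 1 − x_ℓ/(n+1))`, and it equals `(2,2)` in the coordinate pairs of parts
`4,5,6`.  (The `12` coordinates are indexed by `Fin 6 × Fin 2`: a part and a position
within its coordinate pair.) -/
noncomputable def Xpt (n : ℕ) (x : Fin 3 → Fin n) : Fin 6 × Fin 2 → ℝ := fun p =>
  if h : (p.1 : ℕ) < 3 then
    (if p.2 = 0 then hval n (x ⟨(p.1 : ℕ), h⟩) else 1 - hval n (x ⟨(p.1 : ℕ), h⟩))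
  else 2

/-- The right-half center `Y y`: `(2,2)` in the coordinate pairs of parts `1,2,3` and
`(y_ℓ/(n+1), 1 − y_ℓ/(n+1))` in the coordinate pair of part `ℓ ∈ {4,5,6}`. -/
noncomputable def Ypt (n : ℕ) (y : Fin 3 → Fin n) : Fin 6 × Fin 2 → ℝ := fun p =>
  if h : 3 ≤ (p.1 : ℕ) then
    (if p.2 = 0 then hval n (y ⟨(p.1 : ℕ) - 3, by have := p.1.isLt; omega⟩)
     else 1 - hval n (y ⟨(p.1 : ℕ) - 3, by have := p.1.isLt; omega⟩))
  else 2

/-- The edge center of a hyperedge `e`: in the coordinate pair of a part `ℓ` met by `e`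
(with vertex value `v`) it equals `(1 + v/(n+1), 2 − v/(n+1))`, and it equals `(1,1)` in the
coordinate pairs of all other parts. -/
noncomputable def Ept (n : ℕ) (e : Finset (HypVert n)) : Fin 6 × Fin 2 → ℝ := fun p =>
  if (∃ v : Fin n, (p.1, v) ∈ e) then
    (if p.2 = 0 then 1 + ∑ v : Fin n, (if (p.1, v) ∈ e then hval n v else 0)
     else 2 - ∑ v : Fin n, (if (p.1, v) ∈ e then hval n v else 0))
  else 1

/-- Vertices of the hypercube-center graph `G_S`: left-half centers for non-hyperedge
triples from `V₁ × V₂ × V₃`, right-half centers for non-hyperedge triples from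
`V₄ × V₅ × V₆`, and edge centers for hyperedges whose parts lie neither all in `{1,2,3}`
nor all in `{4,5,6}`. -/
inductive GSVert (n : ℕ) (E : Set (Finset (HypVert n))) : Type where
  | left (x : Fin 3 → Fin n) (h : tripleL x ∉ E)
  | right (y : Fin 3 → Fin n) (h : tripleR y ∉ E)
  | edge (e : Finset (HypVert n)) (he : e ∈ E)
      (h1 : ¬ hparts e ⊆ ({0, 1, 2} : Finset (Fin 6)))
      (h2 : ¬ hparts e ⊆ ({3, 4, 5} : Finset (Fin 6)))

/-- The center in `ℝ^12` associated to each vertex of `G_S`. -/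
noncomputable def gsPos {n : ℕ} {E : Set (Finset (HypVert n))} :
    GSVert n E → (Fin 6 × Fin 2 → ℝ)
  | .left x _ => Xpt n x
  | .right y _ => Ypt n y
  | .edge e _ _ _ => Ept n e

/-- The hypercube-center graph `G_S`: two distinct centers are adjacent iff their
`ℓ∞`-distance is at most `1` (the distance on `Fin 6 × Fin 2 → ℝ` is the sup-metric), i.e.
iff the closed axis-parallel unit hypercubes around them intersect. -/
noncomputable def gsGraph (n : ℕ) (E : Set (Finset (HypVert n))) :
    SimpleGraph (GSVert n E) :=
  SimpleGraph.fromRel fun u v => dist (gsPos u) (gsPos v) ≤ 1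

lemma hval_pos (n : ℕ) (v : Fin n) : 0 < hval n v := by
  unfold hval; positivity

lemma hval_lt_one (n : ℕ) (v : Fin n) : hval n v < 1 := by
  have h : ((v : ℕ) : ℝ) < n := by exact_mod_cast v.isLt
  unfold hval
  rw [div_lt_one (by positivity)]
  linarith

lemma hval_injective (n : ℕ) : Function.Injective (hval n) := by
  intro a b h
  have hn : (n : ℝ) + 1 ≠ 0 := by positivity
  unfold hval at h
  rw [div_left_inj' hn] at h
  exact Fin.ext (by exact_mod_cast add_right_cancel h)

/-- In a well-formed hypergraph, a hyperedge has at most one vertex in each part. -/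
lemma WellFormed.injOn {n : ℕ} {E : Set (Finset (HypVert n))} (hE : WellFormed E)
    {e : Finset (HypVert n)} (he : e ∈ E) : Set.InjOn Prod.fst (e : Set (HypVert n)) := by
  obtain ⟨h1, h2⟩ := hE e he
  exact Finset.card_image_iff.mp (h2.trans h1.symm)

lemma mem_tripleL {n : ℕ} {x : Fin 3 → Fin n} {i : Fin 6} {v : Fin n} :
    (i, v) ∈ tripleL x ↔ ∃ h : (i : ℕ) < 3, v = x ⟨i, h⟩ := by
  simp only [tripleL, Finset.mem_image, Finset.mem_univ, true_and, Prod.mk.injEq]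
  constructor
  · rintro ⟨l, rfl, rfl⟩
    exact ⟨l.isLt, rfl⟩
  · rintro ⟨h, rfl⟩
    exact ⟨⟨i, h⟩, rfl, rfl⟩

lemma mem_tripleR {n : ℕ} {y : Fin 3 → Fin n} {i : Fin 6} {v : Fin n} :
    (i, v) ∈ tripleR y ↔ ∃ _ : 3 ≤ (i : ℕ), v = y ⟨(i : ℕ) - 3, by omega⟩ := by
  simp only [tripleR, Finset.mem_image, Finset.mem_univ, true_and, Prod.mk.injEq]
  constructor
  · rintro ⟨l, rfl, rfl⟩
    exact ⟨by simp, by simp⟩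
  · rintro ⟨h, rfl⟩
    exact ⟨⟨(i : ℕ) - 3, by omega⟩, Fin.ext (by simp; omega), rfl⟩

lemma Ept_of_mem {n : ℕ} {e : Finset (HypVert n)}
    (he : Set.InjOn Prod.fst (e : Set (HypVert n))) {i : Fin 6} {v : Fin n} (hv : (i, v) ∈ e)
    (j : Fin 2) : Ept n e (i, j) = if j = 0 then 1 + hval n v else 2 - hval n v := by
  have hmem : ∀ w, (i, w) ∈ e ↔ w = v := fun w =>
    ⟨fun hw => congrArg Prod.snd (he hw hv rfl), fun h => h ▸ hv⟩
  simp [Ept, hmem]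

lemma Ept_of_forall_notMem {n : ℕ} {e : Finset (HypVert n)} {i : Fin 6}
    (h : ∀ v, (i, v) ∉ e) (j : Fin 2) : Ept n e (i, j) = 1 := by
  simp [Ept, h]

/-- Every coordinate of an edge center lies in `[1, 2]`. -/
lemma Ept_mem_Icc {n : ℕ} {e : Finset (HypVert n)}
    (he : Set.InjOn Prod.fst (e : Set (HypVert n))) (p : Fin 6 × Fin 2) :
    Ept n e p ∈ Set.Icc (1 : ℝ) 2 := by
  obtain ⟨i, j⟩ := p
  by_cases h : ∃ v, (i, v) ∈ e
  · obtain ⟨v, hv⟩ := h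
    have h0 := hval_pos n v
    have h1 := hval_lt_one n v
    rw [Ept_of_mem he hv]
    split_ifs <;> constructor <;> linarith
  · push Not at h
    rw [Ept_of_forall_notMem h]
    norm_num

/-- The coordinate pair `(a, 1 - a)` of a half center with `a = hval n w` is within distance `1`
of the corresponding pair of an edge center iff the hyperedge contains no vertex of that part
other than `w`. -/
lemma abs_sub_Ept_le_one_iff {n : ℕ} {e : Finset (HypVert n)}
    (he : Set.InjOn Prod.fst (e : Set (HypVert n))) (i : Fin 6) (w : Fin n) :
    (∀ j : Fin 2, |(if j = 0 then hval n w else 1 - hval n w) - Ept n e (i, j)| ≤ 1) ↔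
      ∀ v, (i, v) ∈ e → v = w := by
  have hw0 := hval_pos n w
  have hw1 := hval_lt_one n w
  constructor
  · intro h v hv
    have h0 := h 0
    have h1 := h 1
    rw [Ept_of_mem he hv, abs_le] at h0 h1
    simp only [if_true, one_ne_zero, if_false] at h0 h1
    exact hval_injective n (by linarith [h0.1, h1.1])
  · intro h j
    by_cases hi : ∃ v, (i, v) ∈ e
    · obtain ⟨v, hv⟩ := hi
      obtain rfl := h v hv
      rw [Ept_of_mem he hv, abs_le]
      split_ifs <;> constructor <;> linarith
    · push Not at hi
      rw [Ept_of_forall_notMem hi, abs_le]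
      split_ifs <;> constructor <;> linarith

lemma abs_two_sub_Ept_le_one {n : ℕ} {e : Finset (HypVert n)}
    (he : Set.InjOn Prod.fst (e : Set (HypVert n))) (p : Fin 6 × Fin 2) :
    |2 - Ept n e p| ≤ 1 := by
  obtain ⟨h1, h2⟩ := Ept_mem_Icc he p
  rw [abs_le]
  constructor <;> linarith

lemma dist_Xpt_Ept_le_one_iff {n : ℕ} {e : Finset (HypVert n)}
    (he : Set.InjOn Prod.fst (e : Set (HypVert n))) (x : Fin 3 → Fin n) :
    dist (Xpt n x) (Ept n e) ≤ 1 ↔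
      ∀ (i : Fin 6) (v : Fin n), (i : ℕ) < 3 → (i, v) ∈ e → (i, v) ∈ tripleL x := by
  simp only [dist_pi_le_iff zero_le_one, Real.dist_eq, Prod.forall]
  refine forall_congr' fun i => ?_
  by_cases hi : (i : ℕ) < 3
  · simpa [Xpt, hi, mem_tripleL] using abs_sub_Ept_le_one_iff he i (x ⟨i, hi⟩)
  · simp [Xpt, hi, abs_two_sub_Ept_le_one he]

lemma dist_Ypt_Ept_le_one_iff {n : ℕ} {e : Finset (HypVert n)}
    (he : Set.InjOn Prod.fst (e : Set (HypVert n))) (y : Fin 3 → Fin n) :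
    dist (Ypt n y) (Ept n e) ≤ 1 ↔
      ∀ (i : Fin 6) (v : Fin n), 3 ≤ (i : ℕ) → (i, v) ∈ e → (i, v) ∈ tripleR y := by
  simp only [dist_pi_le_iff zero_le_one, Real.dist_eq, Prod.forall]
  refine forall_congr' fun i => ?_
  by_cases hi : 3 ≤ (i : ℕ)
  · simpa [Ypt, hi, mem_tripleR] using
      abs_sub_Ept_le_one_iff he i (y ⟨(i : ℕ) - 3, by omega⟩)
  · simp [Ypt, hi, abs_two_sub_Ept_le_one he]

lemma one_lt_dist_Xpt_Ypt {n : ℕ} (x y : Fin 3 → Fin n) : 1 < dist (Xpt n x) (Ypt n y) := by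
  have h := dist_le_pi_dist (Xpt n x) (Ypt n y) (0, 0)
  have h1 := hval_lt_one n (x 0)
  rw [Real.dist_eq, abs_sub_comm] at h
  have h2 := (le_abs_self _).trans h
  simp [Xpt, Ypt] at h2
  linarith

/-- An edge center is within distance `1` of both `X x` and `Y y` iff its hyperedge is contained
in the union of the two vertex triples. -/
lemma dist_Xpt_le_and_dist_Ypt_le_iff {n : ℕ} {e : Finset (HypVert n)}
    (he : Set.InjOn Prod.fst (e : Set (HypVert n))) (x y : Fin 3 → Fin n) :
    dist (Xpt n x) (Ept n e) ≤ 1 ∧ dist (Ypt n y) (Ept n e) ≤ 1 ↔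
      e ⊆ tripleL x ∪ tripleR y := by
  rw [dist_Xpt_Ept_le_one_iff he, dist_Ypt_Ept_le_one_iff he]
  constructor
  · rintro ⟨hl, hr⟩ ⟨i, v⟩ hv
    rw [Finset.mem_union]
    rcases lt_or_ge (i : ℕ) 3 with hi | hi
    · exact Or.inl (hl i v hi hv)
    · exact Or.inr (hr i v hi hv)
  · intro h
    refine ⟨fun i v hi hv => ?_, fun i v hi hv => ?_⟩
    · refine (Finset.mem_union.mp (h hv)).resolve_right fun hR => ?_
      obtain ⟨hlt, -⟩ := mem_tripleR.mp hR
      omega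
    · refine (Finset.mem_union.mp (h hv)).resolve_left fun hL => ?_
      obtain ⟨hlt, -⟩ := mem_tripleL.mp hL
      omega

lemma mem_hparts {n : ℕ} {e : Finset (HypVert n)} {i : Fin 6} {v : Fin n} (h : (i, v) ∈ e) :
    i ∈ hparts e :=
  Finset.mem_image_of_mem Prod.fst h

lemma eq_tripleL_of_hparts_subset {n : ℕ} {e : Finset (HypVert n)} {x y : Fin 3 → Fin n}
    (hcard : e.card = 3) (he : e ⊆ tripleL x ∪ tripleR y)
    (hp : hparts e ⊆ ({0, 1, 2} : Finset (Fin 6))) : e = tripleL x := by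
  refine Finset.eq_of_subset_of_card_le ?_ (hcard ▸ Finset.card_image_le)
  rintro ⟨i, v⟩ hv
  refine (Finset.mem_union.mp (he hv)).resolve_right fun hR => ?_
  obtain ⟨hi, -⟩ := mem_tripleR.mp hR
  have := hp (mem_hparts hv)
  simp only [Finset.mem_insert, Finset.mem_singleton] at this
  rcases this with rfl | rfl | rfl <;> simp at hi

lemma eq_tripleR_of_hparts_subset {n : ℕ} {e : Finset (HypVert n)} {x y : Fin 3 → Fin n}
    (hcard : e.card = 3) (he : e ⊆ tripleL x ∪ tripleR y)
    (hp : hparts e ⊆ ({3, 4, 5} : Finset (Fin 6))) : e = tripleR y := by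
  refine Finset.eq_of_subset_of_card_le ?_ (hcard ▸ Finset.card_image_le)
  rintro ⟨i, v⟩ hv
  refine (Finset.mem_union.mp (he hv)).resolve_left fun hL => ?_
  obtain ⟨hi, -⟩ := mem_tripleL.mp hL
  have := hp (mem_hparts hv)
  simp only [Finset.mem_insert, Finset.mem_singleton] at this
  rcases this with rfl | rfl | rfl <;> simp at hi

lemma gsGraph_adj {n : ℕ} {E : Set (Finset (HypVert n))} {u v : GSVert n E} :
    (gsGraph n E).Adj u v ↔ u ≠ v ∧ dist (gsPos u) (gsPos v) ≤ 1 := by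
  simp [gsGraph, SimpleGraph.fromRel_adj, dist_comm (gsPos v)]

/-- Two distinct non-adjacent vertices are at distance at most `2` iff they have a common
neighbor. -/
lemma SimpleGraph.edist_le_two_iff_of_not_adj {V : Type*} {G : SimpleGraph V} {u v : V}
    (hne : u ≠ v) (hadj : ¬ G.Adj u v) :
    G.edist u v ≤ 2 ↔ ∃ w, G.Adj u w ∧ G.Adj w v := by
  constructor
  · intro h
    obtain ⟨p, hp⟩ := SimpleGraph.exists_walk_of_edist_ne_top
      (ne_top_of_le_ne_top (by decide) h)
    rw [← hp] at h
    have hlen : p.length ≤ 2 := by exact_mod_cast h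
    match p, hlen with
    | .nil, _ => exact absurd rfl hne
    | .cons h1 .nil, _ => exact absurd h1 hadj
    | .cons h1 (.cons h2 .nil), _ => exact ⟨_, h1, h2⟩
    | .cons _ (.cons _ (.cons _ _)), hlen => simp at hlen
  · rintro ⟨w, h1, h2⟩
    exact (SimpleGraph.Walk.cons h1 (SimpleGraph.Walk.cons h2 SimpleGraph.Walk.nil)).edist_le

lemma gsGraph_left_adj_edge {n : ℕ} {E : Set (Finset (HypVert n))} {x : Fin 3 → Fin n}
    {hx : tripleL x ∉ E} {e : Finset (HypVert n)} {he : e ∈ E} {h1 h2} :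
    (gsGraph n E).Adj (.left x hx) (.edge e he h1 h2) ↔ dist (Xpt n x) (Ept n e) ≤ 1 := by
  rw [gsGraph_adj, gsPos, gsPos]
  simp

lemma gsGraph_right_adj_edge {n : ℕ} {E : Set (Finset (HypVert n))} {y : Fin 3 → Fin n}
    {hy : tripleR y ∉ E} {e : Finset (HypVert n)} {he : e ∈ E} {h1 h2} :
    (gsGraph n E).Adj (.right y hy) (.edge e he h1 h2) ↔ dist (Ypt n y) (Ept n e) ≤ 1 := by
  rw [gsGraph_adj, gsPos, gsPos]
  simp

/-- In `G_S`, a left-half center and a right-half center are at distance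
greater than `2` iff the corresponding `6`-tuple is an independent set in the hypergraph,
i.e. no hyperedge is contained in the union of the two vertex triples. -/
theorem gsGraph_left_right_distance (n : ℕ) (hn : 1 ≤ n) (E : Set (Finset (HypVert n)))
    (hE : WellFormed E)
    (x : Fin 3 → Fin n) (hx : tripleL x ∉ E)
    (y : Fin 3 → Fin n) (hy : tripleR y ∉ E) :
    2 < (gsGraph n E).edist (GSVert.left x hx) (GSVert.right y hy) ↔
      ¬ ∃ e ∈ E, e ⊆ tripleL x ∪ tripleR y := by
  have hnadj : ∀ a b ha hb,
      ¬ (gsGraph n E).Adj (GSVert.left a ha) (GSVert.right b hb) := fun a b _ _ h =>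
    (one_lt_dist_Xpt_Ypt a b).not_ge (gsGraph_adj.mp h).2
  rw [← not_le, not_iff_not,
    SimpleGraph.edist_le_two_iff_of_not_adj (by simp) (hnadj x y hx hy)]
  constructor
  · rintro ⟨w, h1, h2⟩
    match w with
    | .left a ha => exact absurd h2 (hnadj a y ha hy)
    | .right b hb => exact absurd h1 (hnadj x b hx hb)
    | .edge e he _ _ =>
      exact ⟨e, he, (dist_Xpt_le_and_dist_Ypt_le_iff (hE.injOn he) x y).mp
        ⟨gsGraph_left_adj_edge.mp h1, gsGraph_right_adj_edge.mp h2.symm⟩⟩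
  · rintro ⟨e, he, hsub⟩
    obtain ⟨h1, h2⟩ := (dist_Xpt_le_and_dist_Ypt_le_iff (hE.injOn he) x y).mpr hsub
    have hcard := (hE e he).1
    refine ⟨.edge e he (fun hp => hx (eq_tripleL_of_hparts_subset hcard hsub hp ▸ he))
      (fun hp => hy (eq_tripleR_of_hparts_subset hcard hsub hp ▸ he)),
      gsGraph_left_adj_edge.mpr h1, (gsGraph_right_adj_edge.mpr h2).symm⟩
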